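/- arXiv:2006.16213 — 2 statements merged into one kernel-verified Lean document; each statement's English description precedes it below -/
import Mathlib

section
/- A real 2 × 2 matrix A = (a_pq) is totally positive (all four entries and the determinant are positive) if and only if there exist λ > 0 and real numbers α₁ < α₂ and β₁ < β₂ such that a_pq = λ⁻¹·exp(α_p·β_q) for p, q ∈ {1,2}. Consequently, for any totally ordered sets X and Y that admit a totally positive kernel on X × Y, and for any x₁ < x₂ in X and y₁ < y₂ in Y, every totally positive 2 × 2 matrix A arises as the submatrix (K(x_p, y_q))_{p,q=1,2} of some totally positive kernel K : X × Y → ℝ. -/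
/-- A kernel on linearly ordered sets is totally positive if all matrices
obtained by evaluating it on increasing tuples have positive determinant. -/
def IsTPKernel {X Y : Type*} [LinearOrder X] [LinearOrder Y] (K : X → Y → ℝ) : Prop :=
  ∀ (n : ℕ) (x : Fin n → X) (y : Fin n → Y), StrictMono x → StrictMono y →
    0 < (Matrix.of fun i j : Fin n => K (x i) (y j)).det

/-- A real `2 × 2` matrix is totally positive iff all four entries and the
determinant are positive. -/
def IsTP2Mat (A : Matrix (Fin 2) (Fin 2) ℝ) : Prop :=
  (∀ p q : Fin 2, 0 < A p q) ∧ 0 < A.det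

/-!
The hard point is that `exp (s * t)` is a totally positive kernel. By induction on `n`: rescale the
rows so that the first column is constantly `1`, subtract from each row its predecessor, and apply
the mean value theorem in each row. A minor of size `n + 1` then becomes a positive multiple of a
minor of size `n` at intermediate points `t i ∈ (a i, a (i + 1))`, which are again increasing.

A totally positive `2 × 2` matrix `A` is recovered from `L p q = log (A p q)`, which satisfies
`L 0 1 + L 1 0 < L 0 0 + L 1 1`: some constant `m` makes `L p q + m` of rank one, say `α p * β q`.
Finally, ratios of two columns (rows) of a totally positive kernel embed `X` (`Y`) into `ℝ`, and
after affine changes of variable the embeddings send `x₁, x₂` to `α` and `y₁, y₂` to `β`.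
-/

open Matrix Set

section MeanValue

theorem exists_mem_Ioo_continuousLinearMap_sub_eq_mul {E : Type*} [NormedAddCommGroup E]
    [NormedSpace ℝ E] (f : E →L[ℝ] ℝ) {γ γ' : ℝ → E} {a b : ℝ} (hab : a < b)
    (hγ : ContinuousOn γ (Icc a b)) (hγ' : ∀ s ∈ Ioo a b, HasDerivAt γ (γ' s) s) :
    ∃ s ∈ Ioo a b, f (γ b - γ a) = (b - a) * f (γ' s) := by
  obtain ⟨s, hs, hslope⟩ := exists_hasDerivAt_eq_slope (f ∘ γ) (f ∘ γ') hab
    (f.continuous.comp_continuousOn hγ) fun s hs ↦ f.hasFDerivAt.comp_hasDerivAt s (hγ' s hs)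
  refine ⟨s, hs, ?_⟩
  simp only [Function.comp_apply] at hslope
  rw [hslope, mul_div_cancel₀ _ (sub_pos.2 hab).ne', map_sub]

variable {ι : Type*} [Fintype ι] {E : ι → Type*} [∀ i, NormedAddCommGroup (E i)]
  [∀ i, NormedSpace ℝ (E i)]

theorem exists_forall_mem_Ioo_continuousMultilinearMap_sub_eq_prod_mul
    (g : ContinuousMultilinearMap ℝ E ℝ)
    {γ γ' : ∀ i, ℝ → E i} {a b : ι → ℝ} (hab : ∀ i, a i < b i)
    (hγ : ∀ i, ContinuousOn (γ i) (Icc (a i) (b i)))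
    (hγ' : ∀ i, ∀ s ∈ Ioo (a i) (b i), HasDerivAt (γ i) (γ' i s) s) :
    ∃ t : ι → ℝ, (∀ i, t i ∈ Ioo (a i) (b i)) ∧
      g (fun i ↦ γ i (b i) - γ i (a i)) = (∏ i, (b i - a i)) * g fun i ↦ γ' i (t i) := by
  classical
  let δ : ∀ i, E i := fun i ↦ γ i (b i) - γ i (a i)
  suffices ∀ S : Finset ι, ∃ t : ι → ℝ, (∀ i, t i ∈ Ioo (a i) (b i)) ∧
      g δ = (∏ i ∈ S, (b i - a i)) * g (S.piecewise (fun i ↦ γ' i (t i)) δ) by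
    simpa only [Finset.piecewise_univ] using this Finset.univ
  intro S
  induction S using Finset.induction_on with
  | empty =>
    choose t ht using fun i ↦ exists_between (hab i)
    exact ⟨t, ht, by simp⟩
  | insert k S hk ih =>
    obtain ⟨t, ht, hg⟩ := ih
    let m := S.piecewise (fun i ↦ γ' i (t i)) δ
    obtain ⟨s, hs, hmean⟩ := exists_mem_Ioo_continuousLinearMap_sub_eq_mul
      (g.toContinuousLinearMap m k) (hab k) (hγ k) (hγ' k)
    have hm : Function.update m k (δ k) = m :=
      Function.update_eq_self_iff.2 (Finset.piecewise_eq_of_notMem _ _ _ hk).symm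
    have hgm : g m = (b k - a k) * g (Function.update m k (γ' k s)) :=
      (congrArg g hm).symm.trans hmean
    have hts : (insert k S).piecewise (fun i ↦ γ' i (Function.update t k s i)) δ =
        Function.update m k (γ' k s) := by
      rw [Finset.piecewise_insert, Function.update_self]
      congr 1
      refine Finset.piecewise_congr S (fun i hi ↦ ?_) fun _ _ ↦ rfl
      rw [Function.update_of_ne (ne_of_mem_of_not_mem hi hk)]
    refine ⟨Function.update t k s, fun i ↦ ?_, ?_⟩
    · rcases eq_or_ne i k with rfl | hik
      · simpa using hs
      · simpa [hik] using ht i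
    · rw [hts, Finset.prod_insert hk, hg, hgm]
      ring

end MeanValue

section Determinant

theorem det_eq_det_succ_sub_castSucc {R : Type*} [CommRing R] {n : ℕ}
    {A : Matrix (Fin (n + 1)) (Fin (n + 1)) R} (hA : ∀ i, A i 0 = 1) :
    A.det = (of fun i j : Fin n ↦ A i.succ j.succ - A i.castSucc j.succ).det := by
  let B : Matrix (Fin (n + 1)) (Fin (n + 1)) R :=
    of (vecCons (A 0) fun i ↦ A i.succ - A i.castSucc)
  have hAB : A.det = B.det :=
    det_eq_of_forall_row_eq_smul_add_pred (fun _ ↦ 1) (by simp [B]) (by simp [B])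
  rw [hAB, det_succ_column_zero, Fin.sum_univ_succ]
  have hB : ∀ i : Fin n, B i.succ 0 = 0 := by simp [B, hA]
  have hB₀ : B 0 0 = 1 := by simp [B, hA]
  simp only [hB, hB₀, mul_zero, zero_mul, Finset.sum_const_zero, add_zero, Fin.val_zero, pow_zero,
    one_mul]
  rfl

theorem strictMono_of_forall_mem_Ioo_castSucc_succ {α : Type*} [Preorder α] {n : ℕ}
    {a : Fin (n + 1) → α} (ha : Monotone a) {t : Fin n → α}
    (ht : ∀ i, t i ∈ Ioo (a i.castSucc) (a i.succ)) : StrictMono t := fun i j hij ↦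
  calc t i < a i.succ := (ht i).2
    _ ≤ a j.castSucc := ha (Fin.succ_le_castSucc_iff.2 hij)
    _ < t j := (ht j).1

theorem exists_strictMono_det_eq_prod_mul_det_deriv {n : ℕ} {F : Fin (n + 1) → ℝ → ℝ}
    {F' : Fin n → ℝ → ℝ} (hF₀ : ∀ s, F 0 s = 1)
    (hF : ∀ j s, HasDerivAt (F j.succ) (F' j s) s) {a : Fin (n + 1) → ℝ} (ha : StrictMono a) :
    ∃ t : Fin n → ℝ, StrictMono t ∧
      (of fun i j ↦ F j (a i)).det =
        (∏ i : Fin n, (a i.succ - a i.castSucc)) * (of fun i j ↦ F' j (t i)).det := by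
  let γ : ℝ → Fin n → ℝ := fun s j ↦ F j.succ s
  have hγ : ∀ s, HasDerivAt γ (fun j ↦ F' j s) s := fun s ↦ hasDerivAt_pi.2 fun j ↦ hF j s
  let detRow : ContinuousMultilinearMap ℝ (fun _ : Fin n ↦ Fin n → ℝ) ℝ :=
    { (detRowAlternating : (Fin n → ℝ) [⋀^Fin n]→ₗ[ℝ] ℝ).toMultilinearMap with
      cont := continuous_id.matrix_det }
  obtain ⟨t, ht, hdet⟩ := exists_forall_mem_Ioo_continuousMultilinearMap_sub_eq_prod_mul
    detRow (fun i : Fin n ↦ ha (Fin.castSucc_lt_succ (i := i)))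
    (fun _ s _ ↦ (hγ s).continuousAt.continuousWithinAt) fun _ s _ ↦ hγ s
  refine ⟨t, strictMono_of_forall_mem_Ioo_castSucc_succ ha.monotone ht, ?_⟩
  rw [det_eq_det_succ_sub_castSucc fun i ↦ hF₀ (a i)]
  exact hdet

theorem det_exp_mul_pos {n : ℕ} {a b : Fin n → ℝ} (ha : StrictMono a) (hb : StrictMono b) :
    0 < (of fun i j ↦ Real.exp (a i * b j)).det := by
  induction n with
  | zero => simp
  | succ n ih =>
    let c : Fin n → ℝ := fun j ↦ b j.succ - b 0
    have hc : StrictMono c := fun i j hij ↦ sub_lt_sub_right (hb (Fin.succ_lt_succ_iff.2 hij)) _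
    have hc₀ : ∀ j, 0 < c j := fun j ↦ sub_pos.2 (hb j.succ_pos)
    have hrescale : (of fun i j ↦ Real.exp (a i * b j)).det =
        (∏ i, Real.exp (a i * b 0)) * (of fun i j ↦ Real.exp (a i * (b j - b 0))).det := by
      rw [← det_mul_column]
      simp only [of_apply, ← Real.exp_add, mul_sub, add_sub_cancel]
    have hderiv : ∀ (j : Fin n) (s : ℝ),
        HasDerivAt (fun s ↦ Real.exp (s * c j)) (c j * Real.exp (s * c j)) s := fun j s ↦ by
      simpa only [mul_comm (c j)] using (hasDerivAt_mul_const (c j)).exp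
    obtain ⟨t, ht, hdet⟩ := exists_strictMono_det_eq_prod_mul_det_deriv
      (F := fun j s ↦ Real.exp (s * (b j - b 0))) (by simp) hderiv ha
    have hcol : (of fun i j ↦ c j * Real.exp (t i * c j)).det =
        (∏ j, c j) * (of fun i j ↦ Real.exp (t i * c j)).det := det_mul_row c _
    rw [hrescale, hdet, hcol]
    have hstep : ∀ i : Fin n, 0 < a i.succ - a i.castSucc := fun i ↦
      sub_pos.2 (ha Fin.castSucc_lt_succ)
    have hminor := ih ht hc
    exact mul_pos (Finset.prod_pos fun i _ ↦ Real.exp_pos _)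
      (mul_pos (Finset.prod_pos fun i _ ↦ hstep i)
        (mul_pos (Finset.prod_pos fun j _ ↦ hc₀ j) hminor))

end Determinant

section Kernel

variable {X Y : Type*} [LinearOrder X] [LinearOrder Y] {K : X → Y → ℝ}

/-- Total positivity of order two, as a condition on the `2 × 2` submatrices only. When `X` and `Y`
have at least two elements each, this includes positivity of `K`. -/
def IsTP2Kernel (K : X → Y → ℝ) : Prop :=
  ∀ ⦃x : Fin 2 → X⦄ ⦃y : Fin 2 → Y⦄, StrictMono x → StrictMono y →
    IsTP2Mat (of fun p q ↦ K (x p) (y q))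

theorem IsTP2Mat.transpose {A : Matrix (Fin 2) (Fin 2) ℝ} (hA : IsTP2Mat A) : IsTP2Mat Aᵀ :=
  ⟨fun p q ↦ hA.1 q p, A.det_transpose ▸ hA.2⟩

namespace IsTPKernel

theorem pos (hK : IsTPKernel K) (x : X) (y : Y) : 0 < K x y := by
  simpa using hK 1 (fun _ ↦ x) (fun _ ↦ y) (Subsingleton.strictMono _) (Subsingleton.strictMono _)

theorem isTP2Kernel (hK : IsTPKernel K) : IsTP2Kernel K := fun x y hx hy ↦
  ⟨fun p q ↦ hK.pos (x p) (y q), hK 2 x y hx hy⟩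

theorem comp_strictMono {X' Y' : Type*} [LinearOrder X'] [LinearOrder Y'] (hK : IsTPKernel K)
    {f : X' → X} {g : Y' → Y} (hf : StrictMono f) (hg : StrictMono g) :
    IsTPKernel fun x y ↦ K (f x) (g y) :=
  fun n x y hx hy ↦ hK n (f ∘ x) (g ∘ y) (hf.comp hx) (hg.comp hy)

theorem const_mul (hK : IsTPKernel K) {c : ℝ} (hc : 0 < c) : IsTPKernel fun x y ↦ c * K x y := by
  intro n x y hx hy
  have hdet : (of fun i j ↦ c * K (x i) (y j)).det = c ^ n * (of fun i j ↦ K (x i) (y j)).det :=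
    (det_smul (of fun i j ↦ K (x i) (y j)) c).trans (by rw [Fintype.card_fin])
  rw [hdet]
  exact mul_pos (pow_pos hc n) (hK n x y hx hy)

end IsTPKernel

theorem isTPKernel_exp_mul : IsTPKernel fun s t : ℝ ↦ Real.exp (s * t) :=
  fun _ _ _ hx hy ↦ det_exp_mul_pos hx hy

namespace IsTP2Kernel

theorem flip (hK : IsTP2Kernel K) : IsTP2Kernel fun y x ↦ K x y :=
  fun _ _ hy hx ↦ (hK hx hy).transpose

theorem strictMono_div (hK : IsTP2Kernel K) {y₁ y₂ : Y} (hy : y₁ < y₂) :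
    StrictMono fun x ↦ K x y₂ / K x y₁ := by
  intro x x' hx
  obtain ⟨hpos, hdet⟩ := hK (x := ![x, x']) (y := ![y₁, y₂]) (by simpa) (by simpa)
  have hx₁ : 0 < K x y₁ := hpos 0 0
  have hx₁' : 0 < K x' y₁ := hpos 1 0
  have hcross : K x y₂ * K x' y₁ < K x y₁ * K x' y₂ := by simpa [det_fin_two] using hdet
  refine (div_lt_div_iff₀ hx₁ hx₁').2 ?_
  rwa [mul_comm (K x' y₂)]

end IsTP2Kernel

end Kernel

section Interpolation

variable {𝕜 : Type*} [Field 𝕜] [LinearOrder 𝕜] [IsStrictOrderedRing 𝕜]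

theorem exists_strictMono_apply_eq {X : Type*} [Preorder X] {f : X → 𝕜}
    (hf : StrictMono f) {x₁ x₂ : X} (hx : x₁ < x₂) {a b : 𝕜} (hab : a < b) :
    ∃ g : X → 𝕜, StrictMono g ∧ g x₁ = a ∧ g x₂ = b := by
  have hfx : 0 < f x₂ - f x₁ := sub_pos.2 (hf hx)
  have hslope : 0 < (b - a) / (f x₂ - f x₁) := div_pos (sub_pos.2 hab) hfx
  refine ⟨fun x ↦ a + (b - a) / (f x₂ - f x₁) * (-f x₁ + f x),
    ((hf.const_add _).const_mul hslope).const_add a, by simp, ?_⟩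
  simp only [neg_add_eq_sub, div_mul_cancel₀ _ hfx.ne', add_sub_cancel]

theorem exists_eq_mul_sub_const_of_add_lt_add {L : Matrix (Fin 2) (Fin 2) 𝕜}
    (hL : L 0 1 + L 1 0 < L 0 0 + L 1 1) :
    ∃ (m : 𝕜) (u v : Fin 2 → 𝕜), u 0 < u 1 ∧ v 0 < v 1 ∧ ∀ p q, L p q = u p * v q - m := by
  set d := L 0 0 + L 1 1 - (L 0 1 + L 1 0) with hd
  have hd₀ : 0 < d := sub_pos.2 hL
  -- Adding `m` to every entry changes the determinant by `m * d`, so this `m` makes it vanish.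
  refine ⟨-L.det / d, fun p ↦ L p 1 - L p 0, fun q ↦ (L 1 q - L 0 q) / d, by linarith,
    div_lt_div_of_pos_right (by linarith) hd₀, ?_⟩
  simp only [Fin.forall_fin_two, det_fin_two]
  refine ⟨⟨?_, ?_⟩, ?_, ?_⟩ <;> field_simp <;> rw [hd] <;> ring

end Interpolation

theorem isTP2Mat_iff_exists_exp_mul {A : Matrix (Fin 2) (Fin 2) ℝ} :
    IsTP2Mat A ↔ ∃ (lam : ℝ) (α β : Fin 2 → ℝ), 0 < lam ∧ α 0 < α 1 ∧ β 0 < β 1 ∧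
      ∀ p q : Fin 2, A p q = lam⁻¹ * Real.exp (α p * β q) := by
  constructor
  · rintro ⟨hpos, hdet⟩
    have hlog : Real.log (A 0 1) + Real.log (A 1 0) < Real.log (A 0 0) + Real.log (A 1 1) := by
      rw [← Real.log_mul (hpos _ _).ne' (hpos _ _).ne',
        ← Real.log_mul (hpos _ _).ne' (hpos _ _).ne']
      rw [det_fin_two] at hdet
      exact Real.log_lt_log (mul_pos (hpos _ _) (hpos _ _)) (sub_pos.1 hdet)
    obtain ⟨m, α, β, hα, hβ, hL⟩ := exists_eq_mul_sub_const_of_add_lt_add (L := A.map Real.log) hlog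
    refine ⟨Real.exp m, α, β, Real.exp_pos m, hα, hβ, fun p q ↦ ?_⟩
    rw [← Real.exp_log (hpos p q), show Real.log (A p q) = α p * β q - m from hL p q, Real.exp_sub,
      div_eq_inv_mul]
  · rintro ⟨lam, α, β, hlam, hα, hβ, hA⟩
    obtain rfl : A = of fun p q ↦ lam⁻¹ * Real.exp (α p * β q) := ext hA
    exact (isTPKernel_exp_mul.const_mul (inv_pos.2 hlam)).isTP2Kernel
      (Fin.strictMono_iff_lt_succ.2 (by simpa)) (Fin.strictMono_iff_lt_succ.2 (by simpa))

theorem IsTP2Mat.exists_isTPKernel {X Y : Type*} [LinearOrder X] [LinearOrder Y] {f : X → ℝ}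
    {g : Y → ℝ} (hf : StrictMono f) (hg : StrictMono g) {x₁ x₂ : X} (hx : x₁ < x₂) {y₁ y₂ : Y}
    (hy : y₁ < y₂) {A : Matrix (Fin 2) (Fin 2) ℝ} (hA : IsTP2Mat A) :
    ∃ K : X → Y → ℝ, IsTPKernel K ∧
      K x₁ y₁ = A 0 0 ∧ K x₁ y₂ = A 0 1 ∧ K x₂ y₁ = A 1 0 ∧ K x₂ y₂ = A 1 1 := by
  obtain ⟨lam, α, β, hlam, hα, hβ, hA⟩ := isTP2Mat_iff_exists_exp_mul.1 hA
  obtain ⟨φ, hφ, hφ₁, hφ₂⟩ := exists_strictMono_apply_eq hf hx hα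
  obtain ⟨ψ, hψ, hψ₁, hψ₂⟩ := exists_strictMono_apply_eq hg hy hβ
  refine ⟨fun x y ↦ lam⁻¹ * Real.exp (φ x * ψ y),
    (isTPKernel_exp_mul.comp_strictMono hφ hψ).const_mul (inv_pos.2 hlam), ?_⟩
  simp only [hφ₁, hφ₂, hψ₁, hψ₂, hA, and_self]

theorem stmt_4_general :
    (∀ A : Matrix (Fin 2) (Fin 2) ℝ,
      IsTP2Mat A ↔
        ∃ (lam : ℝ) (α β : Fin 2 → ℝ), 0 < lam ∧ α 0 < α 1 ∧ β 0 < β 1 ∧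
          ∀ p q : Fin 2, A p q = lam⁻¹ * Real.exp (α p * β q)) ∧
    (∀ (X Y : Type*) [LinearOrder X] [LinearOrder Y],
      (∃ K : X → Y → ℝ, IsTP2Kernel K) →
      ∀ x₁ x₂ : X, x₁ < x₂ → ∀ y₁ y₂ : Y, y₁ < y₂ →
      ∀ A : Matrix (Fin 2) (Fin 2) ℝ, IsTP2Mat A →
      ∃ K : X → Y → ℝ, IsTPKernel K ∧
        K x₁ y₁ = A 0 0 ∧ K x₁ y₂ = A 0 1 ∧ K x₂ y₁ = A 1 0 ∧ K x₂ y₂ = A 1 1) :=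
  ⟨fun _ ↦ isTP2Mat_iff_exists_exp_mul, fun _ _ _ _ ⟨_, hK⟩ _ _ hx _ _ hy _ hA ↦
    hA.exists_isTPKernel (hK.strictMono_div hy) (hK.flip.strictMono_div hx) hx hy⟩

theorem stmt_4 :
    (∀ A : Matrix (Fin 2) (Fin 2) ℝ,
      IsTP2Mat A ↔
        ∃ (lam : ℝ) (α β : Fin 2 → ℝ), 0 < lam ∧ α 0 < α 1 ∧ β 0 < β 1 ∧
          ∀ p q : Fin 2, A p q = lam⁻¹ * Real.exp (α p * β q)) ∧
    (∀ (X Y : Type) [LinearOrder X] [LinearOrder Y],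
      (∃ K : X → Y → ℝ, IsTPKernel K) →
      ∀ x₁ x₂ : X, x₁ < x₂ → ∀ y₁ y₂ : Y, y₁ < y₂ →
      ∀ A : Matrix (Fin 2) (Fin 2) ℝ, IsTP2Mat A →
      ∃ K : X → Y → ℝ, IsTPKernel K ∧
        K x₁ y₁ = A 0 0 ∧ K x₁ y₂ = A 0 1 ∧ K x₂ y₁ = A 1 0 ∧ K x₂ y₂ = A 1 1) :=
  stmt_4_general.imp_right fun h X Y _ _ ⟨K, hK⟩ ↦ h X Y ⟨K, hK.isTP2Kernel⟩
end

section
/- Let X and Y be non-empty totally ordered sets. The following are equivalent: (1) there exists a totally positive kernel K : X × Y → ℝ; (2) there exists a TP₂ kernel K : X × Y → ℝ; (3) either X or Y is a singleton, or there exist strictly increasing (order-preserving) injections from X into (0,∞) and from Y into (0,∞). The same equivalence holds if X = Y and the kernels in (1) and (2) are required to be symmetric. -/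
/-- A kernel is `TP_p` if all determinants of size at most `p` drawn from
increasing tuples are positive. -/
def IsTPKernelOfOrder (p : ℕ) {X Y : Type*} [LinearOrder X] [LinearOrder Y]
    (K : X → Y → ℝ) : Prop :=
  ∀ n : ℕ, n ≤ p → ∀ (x : Fin n → X) (y : Fin n → Y), StrictMono x → StrictMono y →
    0 < (Matrix.of fun i j : Fin n => K (x i) (y j)).det

/-!
If `K` is `TP₂` and `b < b'`, the `2 × 2` minors on the columns `b, b'` say exactly that
`a ↦ K a b' / K a b` is strictly increasing, so this ratio embeds `X` into `(0, ∞)`; transposing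
embeds `Y`. Conversely, strictly increasing `f : X → (0, ∞)` and `g : Y → (0, ∞)` give the kernel
`1 / (f a + g b)`, which is symmetric when `f = g`, and whose minors are positive by Cauchy's
determinant formula.
-/

section CauchyMatrix

open Finset

variable {m n 𝕜 : Type*} [Field 𝕜]

/-- The Cauchy matrix with entries `1 / (x i + y j)`. The sign convention `+` (rather than `-`)
keeps all entries positive for positive nodes. -/
def cauchyMatrix (x : m → 𝕜) (y : n → 𝕜) : Matrix m n 𝕜 :=
  Matrix.of fun i j => (x i + y j)⁻¹

-- Subtract `(x 0 + y 0) / (x i + y 0)` times row `0` from every other row `i`: this clears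
-- column `0`, and what remains is the smaller Cauchy matrix with rescaled rows and columns.
lemma det_cauchyMatrix_succ {n : ℕ} (x y : Fin (n + 1) → 𝕜) (hxy : ∀ i j, x i + y j ≠ 0) :
    (cauchyMatrix x y).det =
      (x 0 + y 0)⁻¹ * ((∏ i : Fin n, (x i.succ - x 0) / (x i.succ + y 0)) *
        ((∏ j : Fin n, (y j.succ - y 0) / (x 0 + y j.succ)) *
          (cauchyMatrix (fun i : Fin n => x i.succ) (fun j : Fin n => y j.succ)).det)) := by
  let c : Fin (n + 1) → 𝕜 := Fin.cons 0 fun i => (x 0 + y 0) / (x i.succ + y 0)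
  let B : Matrix (Fin (n + 1)) (Fin (n + 1)) 𝕜 :=
    Matrix.of fun i j => (x i + y j)⁻¹ - c i * (x 0 + y j)⁻¹
  have det_eq : (cauchyMatrix x y).det = B.det :=
    Matrix.det_eq_of_forall_row_eq_smul_add_const c 0 rfl fun i j => by
      simp [cauchyMatrix, B, c]
  have corner : B 0 0 = (x 0 + y 0)⁻¹ := by simp [B, c]
  have column_zero (i : Fin n) : B i.succ 0 = 0 := by
    simp [B, c, div_mul_eq_mul_div, hxy]
  have minor : B.submatrix Fin.succ Fin.succ = Matrix.of fun i j : Fin n =>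
      (x i.succ - x 0) / (x i.succ + y 0) * (Matrix.of fun i j : Fin n =>
        (y j.succ - y 0) / (x 0 + y j.succ) *
          cauchyMatrix (fun i : Fin n => x i.succ) (fun j : Fin n => y j.succ) i j) i j := by
    ext i j
    have := hxy 0 j.succ
    have := hxy i.succ 0
    have := hxy i.succ j.succ
    simp only [B, c, cauchyMatrix, Matrix.of_apply, Matrix.submatrix_apply, Fin.cons_succ]
    field_simp
    ring
  rw [det_eq, Matrix.det_succ_column_zero, Fin.sum_univ_succ]
  simp only [corner, column_zero, Fin.succAbove_zero, minor, Matrix.det_mul_column,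
    Matrix.det_mul_row, Fin.val_zero, pow_zero, one_mul, mul_zero, zero_mul, sum_const_zero,
    add_zero]

theorem det_cauchyMatrix {n : ℕ} (x y : Fin n → 𝕜) (hxy : ∀ i j, x i + y j ≠ 0) :
    (cauchyMatrix x y).det =
      (∏ i, ∏ j ∈ Ioi i, (x j - x i) * (y j - y i)) / ∏ i, ∏ j, (x i + y j) := by
  induction n with
  | zero => simp
  | succ n ih =>
    rw [det_cauchyMatrix_succ x y hxy, ih _ _ fun i j => hxy i.succ j.succ]
    simp only [Fin.prod_univ_succ, Fin.prod_Ioi_zero, Fin.prod_Ioi_succ, prod_mul_distrib,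
      prod_inv_distrib, div_eq_mul_inv, mul_inv]
    ring

theorem det_cauchyMatrix_pos [LinearOrder 𝕜] [IsStrictOrderedRing 𝕜] {n : ℕ} {x y : Fin n → 𝕜}
    (hx : StrictMono x) (hy : StrictMono y) (hxy : ∀ i j, 0 < x i + y j) :
    0 < (cauchyMatrix x y).det := by
  rw [det_cauchyMatrix x y fun i j => (hxy i j).ne']
  refine div_pos (prod_pos fun i _ => prod_pos fun j hij => ?_)
    (prod_pos fun i _ => prod_pos fun j _ => hxy i j)
  have hij : i < j := mem_Ioi.1 hij
  exact mul_pos (sub_pos.2 (hx hij)) (sub_pos.2 (hy hij))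

end CauchyMatrix

section TPKernel

variable {X Y : Type*} [LinearOrder X] [LinearOrder Y] {K : X → Y → ℝ}

lemma isTPKernel_inv_add {f : X → ℝ} {g : Y → ℝ} (hf : StrictMono f) (hg : StrictMono g)
    (hfg : ∀ a b, 0 < f a + g b) : IsTPKernel fun a b => (f a + g b)⁻¹ :=
  fun _ _ _ hx hy => det_cauchyMatrix_pos (hf.comp hx) (hg.comp hy) fun _ _ => hfg _ _

lemma isTPKernel_of_subsingleton (hXY : Subsingleton X ∨ Subsingleton Y)
    (hK : ∀ a b, 0 < K a b) : IsTPKernel K := by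
  intro n x y hx hy
  have : Subsingleton (Fin n) :=
    hXY.elim (fun _ => hx.injective.subsingleton) fun _ => hy.injective.subsingleton
  cases isEmpty_or_nonempty (Fin n) with
  | inl _ => simp
  | inr hn =>
    obtain ⟨i⟩ := hn
    rw [Matrix.det_eq_elem_of_subsingleton _ i]
    exact hK (x i) (y i)

lemma IsTPKernel.isTPKernelOfOrder (hK : IsTPKernel K) (p : ℕ) : IsTPKernelOfOrder p K :=
  fun n _ => hK n

namespace IsTPKernelOfOrder

variable {p : ℕ}

protected lemma flip (hK : IsTPKernelOfOrder p K) : IsTPKernelOfOrder p (flip K) := by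
  intro n hn y x hy hx
  rw [← Matrix.det_transpose]
  exact hK n hn x y hx hy

protected lemma pos (hK : IsTPKernelOfOrder p K) (hp : 1 ≤ p) (a : X) (b : Y) : 0 < K a b := by
  simpa using hK 1 hp ![a] ![b] (Subsingleton.strictMono _) (Subsingleton.strictMono _)

protected lemma mul_lt_mul (hK : IsTPKernelOfOrder p K) (hp : 2 ≤ p) {a a' : X} {b b' : Y}
    (ha : a < a') (hb : b < b') : K a b' * K a' b < K a b * K a' b' := by
  simpa [Matrix.det_fin_two] using
    hK 2 hp ![a, a'] ![b, b'] (by simpa using ha) (by simpa using hb)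

lemma strictMono_div (hK : IsTPKernelOfOrder p K) (hp : 2 ≤ p) {b b' : Y} (hb : b < b') :
    StrictMono fun a => K a b' / K a b := by
  intro a a' ha
  have hpos := hK.pos (one_le_two.trans hp)
  rw [div_lt_div_iff₀ (hpos a b) (hpos a' b), mul_comm (K a' b')]
  exact hK.mul_lt_mul hp ha hb

lemma exists_strictMono_pos [Nontrivial Y] (hK : IsTPKernelOfOrder p K) (hp : 2 ≤ p) :
    ∃ f : X → ℝ, StrictMono f ∧ ∀ a, 0 < f a := by
  obtain ⟨b, b', hb⟩ := exists_pair_lt Y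
  have hpos := hK.pos (one_le_two.trans hp)
  exact ⟨_, hK.strictMono_div hp hb, fun a => div_pos (hpos a b') (hpos a b)⟩

end IsTPKernelOfOrder

end TPKernel

theorem stmt_5_general.{u, v, w} {p : ℕ} (hp : 2 ≤ p) :
    (∀ (X : Type u) (Y : Type v) [LinearOrder X] [LinearOrder Y],
      List.TFAE
        [∃ K : X → Y → ℝ, IsTPKernel K,
         ∃ K : X → Y → ℝ, IsTPKernelOfOrder p K,
         (Subsingleton X ∨ Subsingleton Y) ∨
           ((∃ f : X → ℝ, StrictMono f ∧ ∀ a, 0 < f a) ∧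
            (∃ g : Y → ℝ, StrictMono g ∧ ∀ b, 0 < g b))]) ∧
    (∀ (X : Type w) [LinearOrder X],
      List.TFAE
        [∃ K : X → X → ℝ, (∀ a b, K a b = K b a) ∧ IsTPKernel K,
         ∃ K : X → X → ℝ, (∀ a b, K a b = K b a) ∧ IsTPKernelOfOrder p K,
         Subsingleton X ∨ (∃ f : X → ℝ, StrictMono f ∧ ∀ a, 0 < f a)]) := by
  refine ⟨fun X Y _ _ => ?_, fun X _ => ?_⟩
  · tfae_have 1 → 2 := fun ⟨K, hK⟩ => ⟨K, hK.isTPKernelOfOrder p⟩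
    tfae_have 2 → 3 := fun ⟨K, hK⟩ => by
      rcases subsingleton_or_nontrivial X with hX | hX
      · exact .inl (.inl hX)
      rcases subsingleton_or_nontrivial Y with hY | hY
      · exact .inl (.inr hY)
      exact .inr ⟨hK.exists_strictMono_pos hp, hK.flip.exists_strictMono_pos hp⟩
    tfae_have 3 → 1
    | .inl hXY => ⟨fun _ _ => 1, isTPKernel_of_subsingleton hXY fun _ _ => one_pos⟩
    | .inr ⟨⟨_, hf, hf0⟩, ⟨_, hg, hg0⟩⟩ =>
      ⟨_, isTPKernel_inv_add hf hg fun a b => add_pos (hf0 a) (hg0 b)⟩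
    tfae_finish
  · tfae_have 1 → 2 := fun ⟨K, hsymm, hK⟩ => ⟨K, hsymm, hK.isTPKernelOfOrder p⟩
    tfae_have 2 → 3 := fun ⟨K, _, hK⟩ =>
      (subsingleton_or_nontrivial X).imp_right fun (_ : Nontrivial X) =>
        hK.exists_strictMono_pos hp
    tfae_have 3 → 1
    | .inl hX =>
      ⟨fun _ _ => 1, fun _ _ => rfl, isTPKernel_of_subsingleton (.inl hX) fun _ _ => one_pos⟩
    | .inr ⟨f, hf, hf0⟩ =>
      ⟨_, fun a b => by rw [add_comm (f a)],
        isTPKernel_inv_add hf hf fun a b => add_pos (hf0 a) (hf0 b)⟩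
    tfae_finish

theorem stmt_5 :
    (∀ (X Y : Type) [LinearOrder X] [LinearOrder Y] [Nonempty X] [Nonempty Y],
      List.TFAE
        [∃ K : X → Y → ℝ, IsTPKernel K,
         ∃ K : X → Y → ℝ, IsTPKernelOfOrder 2 K,
         (Subsingleton X ∨ Subsingleton Y) ∨
           ((∃ f : X → ℝ, StrictMono f ∧ ∀ a, 0 < f a) ∧
            (∃ g : Y → ℝ, StrictMono g ∧ ∀ b, 0 < g b))]) ∧
    (∀ (X : Type) [LinearOrder X] [Nonempty X],
      List.TFAE
        [∃ K : X → X → ℝ, (∀ a b, K a b = K b a) ∧ IsTPKernel K,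
         ∃ K : X → X → ℝ, (∀ a b, K a b = K b a) ∧ IsTPKernelOfOrder 2 K,
         Subsingleton X ∨ (∃ f : X → ℝ, StrictMono f ∧ ∀ a, 0 < f a)]) := by
  obtain ⟨h, h_symm⟩ := stmt_5_general.{0, 0, 0} le_rfl
  exact ⟨fun X Y => h X Y, fun X => h_symm X⟩
end
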